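/- For every natural number N ≥ 6 there exists a connected simple graph on Fin N admitting a completely degenerate equilibrium of the identical Kuramoto system. -/

import Mathlib

open Real

open Classical in
/-- Adjacency indicator: `1` if `j` and `k` are adjacent in `G`, `0` otherwise. -/
noncomputable def adjInd {V : Type*} (G : SimpleGraph V) (j k : V) : ℝ :=
  if G.Adj j k then 1 else 0

/-- A completely degenerate equilibrium of the identical Kuramoto system on `G`. -/
def IsCDE {V : Type*} [Fintype V] (G : SimpleGraph V) (θ : V → ℝ) : Prop :=
  (∀ k, ∑ j, adjInd G j k * Real.sin (θ j - θ k) = 0) ∧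
  (∀ j k, G.Adj j k → Real.cos (θ j - θ k) = 0)

/-- Auxiliary adjacency between middle vertices and end vertices. -/
def kAdj {m k : ℕ} (f : Fin m → Fin k) :
    (Fin m × Bool) ⊕ Option (Fin k) → (Fin m × Bool) ⊕ Option (Fin k) → Prop
  | Sum.inl _, Sum.inr none => True
  | Sum.inr none, Sum.inl _ => True
  | Sum.inl p, Sum.inr (some b) => f p.1 = b
  | Sum.inr (some b), Sum.inl p => f p.1 = b
  | _, _ => False

/-- The auxiliary graph. -/
def kGraph {m k : ℕ} (f : Fin m → Fin k) : SimpleGraph ((Fin m × Bool) ⊕ Option (Fin k)) where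
  Adj := kAdj f
  symm := ⟨by
    rintro (a | _ | a) (b | _ | b) h <;> simp_all [kAdj]⟩
  loopless := ⟨by
    rintro (a | _ | a) h <;> simp_all [kAdj]⟩

/-- The phases. -/
noncomputable def kTheta {m k : ℕ} : (Fin m × Bool) ⊕ Option (Fin k) → ℝ
  | Sum.inl (_, true) => π / 2
  | Sum.inl (_, false) => -(π / 2)
  | Sum.inr none => 0
  | Sum.inr (some _) => π

lemma kGraph_connected {m k : ℕ} (f : Fin m → Fin k) (hf : Function.Surjective f) :
    (kGraph f).Connected := by
  rw [SimpleGraph.connected_iff_exists_forall_reachable]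
  refine ⟨Sum.inr none, ?_⟩
  have h1 : ∀ p, (kGraph f).Reachable (Sum.inr none) (Sum.inl p) := fun p =>
    SimpleGraph.Adj.reachable (by simp [kGraph, kAdj])
  rintro (p | _ | b)
  · exact h1 p
  · exact SimpleGraph.Reachable.refl _
  · obtain ⟨i, rfl⟩ := hf b
    exact (h1 (i, true)).trans (SimpleGraph.Adj.reachable (by simp [kGraph, kAdj]))

lemma kGraph_cde {m k : ℕ} (f : Fin m → Fin k) : IsCDE (kGraph f) kTheta := by
  have e1 : π - π / 2 = π / 2 := by ring
  have e2 : π + π / 2 = π / 2 + π := by ring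
  have e3 : -(π / 2) - π = -(π / 2 + π) := by ring
  have e4 : π / 2 - π = -(π / 2) := by ring
  constructor
  · rintro (⟨i, _ | _⟩ | _ | b) <;>
      simp [Fintype.sum_sum_type, Fintype.sum_option, Fintype.sum_prod_type, adjInd, kGraph,
        kAdj, kTheta, e1, e2, Real.sin_add_pi]
    · rw [Finset.sum_eq_single (f i)] <;> simp +contextual [eq_comm]
    · rw [Finset.sum_eq_single (f i)] <;> simp +contextual [eq_comm]
    · refine Finset.sum_eq_zero fun x _ => ?_
      by_cases h : f x = b <;> simp [h]
  · rintro (⟨i, _ | _⟩ | _ | b) (⟨j, _ | _⟩ | _ | c) h <;>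
      first
      | exact h.elim
      | simp only [kTheta, e3, e4, e1, Real.cos_neg, Real.cos_add_pi]; simp [e2, Real.cos_add_pi]; done
      | simp [kTheta, e2, Real.cos_add_pi]

lemma k_transport {N m k : ℕ} (f : Fin m → Fin k) (hf : Function.Surjective f)
    (h : N = m * 2 + (k + 1)) :
    ∃ G : SimpleGraph (Fin N), G.Connected ∧ ∃ θ : Fin N → ℝ, IsCDE G θ := by
  have e : Fin N ≃ (Fin m × Bool) ⊕ Option (Fin k) :=
    Fintype.equivOfCardEq (by simp [h])
  refine ⟨(kGraph f).comap e, ?_, kTheta ∘ e, ?_, ?_⟩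
  · exact (SimpleGraph.Iso.connected_iff (SimpleGraph.Iso.comap e (kGraph f))).2
      (kGraph_connected f hf)
  · intro v
    rw [← (kGraph_cde f).1 (e v), ← e.sum_comp]
    rfl
  · intro a b hab
    exact (kGraph_cde f).2 _ _ hab

/-- for every `N ≥ 6` there is a connected graph on `Fin N` admitting a
completely degenerate equilibrium. -/
theorem stmt6 (N : ℕ) (hN : 6 ≤ N) :
    ∃ G : SimpleGraph (Fin N), G.Connected ∧ ∃ θ : Fin N → ℝ, IsCDE G θ := by
  rcases Nat.even_or_odd' N with ⟨n, h | h⟩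
  · have : NeZero (n - 1) := ⟨by omega⟩
    refine k_transport (m := n - 1) (k := 1) (fun _ => 0) ?_ (by omega)
    intro b
    exact ⟨0, Subsingleton.elim _ _⟩
  · refine k_transport (m := n - 1) (k := 2) (fun i => if i.1 = 0 then 0 else 1) ?_ (by omega)
    intro b
    fin_cases b
    · exact ⟨⟨0, by omega⟩, by simp⟩
    · exact ⟨⟨1, by omega⟩, by simp⟩
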